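/- If M is a bigraded complete k[ħ]-module and V is a bigraded k-module, then the restriction map Hom_{k[ħ]}(V[[ħ]]^{bgr}, M) → Hom_k(V, M) (precomposition with v ↦ v ⊗ 1) is an isomorphism of k[ħ]-modules (of internal hom spaces of bigraded modules). -/

import Mathlib

/-!
An `ħ`-equivariant map `f` out of `V[[ħ]]^{bgr}` sends the power series `∑ v_r ħ^r` to an `h`-adic
sum of the series `∑ h^r (f v_r)`. Sums are unique because `M` is separated, so `f` is determined by
its restriction `g` to `V`. Conversely, when `g` is homogeneous the terms `h^r (g v_r)` all have the
same bidegree, so completeness of that component provides the sum, which by uniqueness depends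
linearly on the power series and intertwines the two actions of `ħ`. An internal morphism is a
finite sum of homogeneous ones.
-/

open scoped DirectSum

namespace Paper

variable (k : Type) [CommRing k] (V : ℤ × ℤ → ModuleCat.{0} k)

/-- The `(p,q)`-homogeneous component of `V[[ħ]]^{bgr}`: the product
`∏_{r ≥ 0} V^{p+r, q-r} ⊗ k·ħ^r`. -/
abbrev comp (pq : ℤ × ℤ) : Type := (r : ℕ) → V (pq.1 + (r : ℤ), pq.2 - (r : ℤ))

/-- Transport along an equality of bidegrees. -/
def castV {pq pq' : ℤ × ℤ} (hh : pq = pq') : V pq →ₗ[k] V pq' := by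
  subst hh; exact LinearMap.id

/-- Multiplication by `ħ` on a homogeneous component (shift of the power series). -/
def shiftFun (pq : ℤ × ℤ) (v : comp k V pq) : comp k V (pq.1 - 1, pq.2 + 1)
  | 0 => 0
  | (r+1) => castV k V
      (by simp only [Prod.mk.injEq]; constructor <;> (push_cast; ring)) (v r)

def shiftLin (pq : ℤ × ℤ) : comp k V pq →ₗ[k] comp k V (pq.1 - 1, pq.2 + 1) where
  toFun := shiftFun k V pq
  map_add' x y := by
    funext r
    cases r with
    | zero => simp [shiftFun]
    | succ r => simp [shiftFun, map_add]
  map_smul' c x := by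
    funext r
    cases r with
    | zero => simp [shiftFun]
    | succ r => simp [shiftFun, map_smul]

/-- The underlying bigraded `k`-module of `V[[ħ]]^{bgr}`. -/
abbrev Vh : Type := ⨁ pq : ℤ × ℤ, comp k V pq

/-- The action of `ħ` (of bidegree `(-1,1)`) on `V[[ħ]]^{bgr}`. -/
def hbar : Vh k V →ₗ[k] Vh k V :=
  DirectSum.toModule k (ℤ × ℤ) (Vh k V) (fun pq =>
    (DirectSum.lof k (ℤ × ℤ) (fun pq => comp k V pq) (pq.1 - 1, pq.2 + 1)).comp
      (shiftLin k V pq))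

/-- The bigrading of `V[[ħ]]^{bgr}`. -/
def VhGr (pq : ℤ × ℤ) : Submodule k (Vh k V) :=
  LinearMap.range (DirectSum.lof k (ℤ × ℤ) (fun pq => comp k V pq) pq)

/-- The inclusion of a component of `V` as the `ħ⁰`-coefficients. -/
def inclFun (pq : ℤ × ℤ) (v : V pq) : comp k V pq
  | 0 => castV k V (by simp) v
  | _+1 => 0

def inclComp (pq : ℤ × ℤ) : V pq →ₗ[k] comp k V pq where
  toFun := inclFun k V pq
  map_add' x y := by
    funext r
    cases r with
    | zero => simp [inclFun, map_add]
    | succ r => simp [inclFun]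
  map_smul' c x := by
    funext r
    cases r with
    | zero => simp [inclFun, map_smul]
    | succ r => simp [inclFun]

/-- The underlying bigraded module of `V` itself. -/
abbrev Vtot : Type := ⨁ pq : ℤ × ℤ, (V pq : Type)

/-- The canonical inclusion `V → V[[ħ]]^{bgr}`, `v ↦ v ⊗ 1`. -/
def incl : Vtot k V →ₗ[k] Vh k V :=
  DirectSum.toModule k (ℤ × ℤ) (Vh k V) (fun pq =>
    (DirectSum.lof k (ℤ × ℤ) (fun pq => comp k V pq) pq).comp (inclComp k V pq))

/-- The bigrading of `V`. -/
def VtotGr (pq : ℤ × ℤ) : Submodule k (Vtot k V) :=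
  LinearMap.range (DirectSum.lof k (ℤ × ℤ) (fun pq => ((V pq : Type))) pq)

/-- A homogeneous morphism of bidegree `c` between bigraded modules. -/
def IsHomogMap {X Y : Type} [AddCommGroup X] [Module k X] [AddCommGroup Y] [Module k Y]
    (GX : ℤ × ℤ → Submodule k X) (GY : ℤ × ℤ → Submodule k Y)
    (c : ℤ × ℤ) (g : X →ₗ[k] Y) : Prop :=
  ∀ (pq : ℤ × ℤ) (x : X), x ∈ GX pq → g x ∈ GY (pq + c)

/-- A morphism belonging to the internal hom of bigraded modules: a finite sum of
homogeneous morphisms. -/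
def IsInternalHom {X Y : Type} [AddCommGroup X] [Module k X] [AddCommGroup Y] [Module k Y]
    (GX : ℤ × ℤ → Submodule k X) (GY : ℤ × ℤ → Submodule k Y) (g : X →ₗ[k] Y) : Prop :=
  ∃ (S : Finset (ℤ × ℤ)) (gc : ℤ × ℤ → (X →ₗ[k] Y)),
    (∀ c, IsHomogMap k GX GY c (gc c)) ∧ g = ∑ c ∈ S, gc c

end Paper

namespace Paper

section AdicSum

variable {R M M' E : Type*} [Ring R] [AddCommGroup M] [Module R M] [AddCommGroup M'] [Module R M']
  [AddCommGroup E] [Module R E] {m m' : ℕ → M} {y y' : M} {h : M →ₗ[R] M}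

/-- `y` is an `h`-adic sum of the series `∑ r, (h ^ r) (m r)`: for every `N` it agrees with the sum
of the first `N` terms modulo the image of `h ^ N`. This is a relation because sums need not be
unique when these images have a nonzero intersection. -/
def IsAdicSum (h : M →ₗ[R] M) (m : ℕ → M) (y : M) : Prop :=
  ∀ N, y - ∑ r ∈ Finset.range N, (h ^ r) (m r) ∈ LinearMap.range (h ^ N)

theorem add_apply_sub_sum_range_succ_mem_range_pow {N : ℕ}
    (hy : y - ∑ r ∈ Finset.range N, (h ^ r) (m (r + 1)) ∈ LinearMap.range (h ^ N)) :
    m 0 + h y - ∑ r ∈ Finset.range (N + 1), (h ^ r) (m r) ∈ LinearMap.range (h ^ (N + 1)) := by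
  obtain ⟨z, hz⟩ := hy
  refine ⟨z, ?_⟩
  simp only [pow_succ', Module.End.mul_apply, hz, map_sub, map_sum, Finset.sum_range_succ',
    pow_zero, Module.End.one_apply]
  abel

theorem isAdicSum_zero (h : M →ₗ[R] M) : IsAdicSum h (fun _ => 0) 0 := fun N => by simp

theorem exists_isAdicSum {P : Submodule R M}
    (hcompl : ∀ x : ℕ → M, (∀ N, x N ∈ P) →
      (∀ N, x (N + 1) - x N ∈ LinearMap.range (h ^ N)) →
      ∃ y ∈ P, ∀ N, y - x N ∈ LinearMap.range (h ^ N))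
    (hm : ∀ r, (h ^ r) (m r) ∈ P) : ∃ y ∈ P, IsAdicSum h m y :=
  hcompl _ (fun _ => sum_mem fun r _ => hm r) fun N =>
    ⟨m N, by rw [Finset.sum_range_succ, add_sub_cancel_left]⟩

namespace IsAdicSum

theorem add (hy : IsAdicSum h m y) (hy' : IsAdicSum h m' y') :
    IsAdicSum h (m + m') (y + y') := fun N => by
  simpa only [Pi.add_apply, map_add, Finset.sum_add_distrib, add_sub_add_comm] using
    add_mem (hy N) (hy' N)

theorem smul (a : R) (hy : IsAdicSum h m y) : IsAdicSum h (a • m) (a • y) := fun N => by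
  simpa only [Pi.smul_apply, map_smul, ← Finset.smul_sum, ← smul_sub] using
    Submodule.smul_mem _ a (hy N)

theorem map {h' : M' →ₗ[R] M'} {f : M →ₗ[R] M'} (hf : ∀ x, f (h x) = h' (f x))
    (hy : IsAdicSum h m y) : IsAdicSum h' (fun r => f (m r)) (f y) := by
  have map_pow_apply (r : ℕ) (x : M) : f ((h ^ r) x) = (h' ^ r) (f x) := by
    simpa only [Module.End.pow_apply] using Function.Semiconj.iterate_right hf r x
  intro N
  obtain ⟨z, hz⟩ := hy N
  exact ⟨f z, by simp only [← map_pow_apply, hz, map_sub, map_sum]⟩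

theorem of_succ (hy : IsAdicSum h (fun r => m (r + 1)) y) : IsAdicSum h m (m 0 + h y)
  | 0 => by simp
  | N + 1 => add_apply_sub_sum_range_succ_mem_range_pow (hy N)

theorem unique (sep : (⨅ N : ℕ, LinearMap.range (h ^ N)) = ⊥) (hy : IsAdicSum h m y)
    (hy' : IsAdicSum h m y') : y = y' := by
  rw [← sub_eq_zero, ← Submodule.mem_bot R, ← sep, Submodule.mem_iInf]
  intro N
  simpa only [sub_sub_sub_cancel_right] using sub_mem (hy N) (hy' N)

end IsAdicSum

theorem exists_linearMap_isAdicSum (sep : (⨅ N : ℕ, LinearMap.range (h ^ N)) = ⊥)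
    {P : Submodule R M} (m : E →ₗ[R] ℕ → M) (hm : ∀ v, ∃ y ∈ P, IsAdicSum h (m v) y) :
    ∃ L : E →ₗ[R] M, ∀ v, L v ∈ P ∧ IsAdicSum h (m v) (L v) := by
  choose L hLP hL using hm
  refine ⟨⟨⟨L, fun v w => ?_⟩, fun a v => ?_⟩, fun v => ⟨hLP v, hL v⟩⟩
  · exact (hL _).unique sep (map_add m v w ▸ (hL v).add (hL w))
  · exact (hL _).unique sep (map_smul m a v ▸ (hL v).smul a)

end AdicSum

section PowerSeries

variable (k : Type) [CommRing k] (V : ℤ × ℤ → ModuleCat.{0} k)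

theorem lof_castV {pq pq' : ℤ × ℤ} (hh : pq = pq') (x : V pq) :
    DirectSum.lof k (ℤ × ℤ) (fun pq => V pq) pq' (castV k V hh x) =
      DirectSum.lof k (ℤ × ℤ) (fun pq => V pq) pq x := by
  subst hh; rfl

/-- The coefficients of a homogeneous power series `∑ v_r ħ^r`, taken in the total module of `V` so
that series of different bidegrees can be compared without transport. -/
def coeff (pq : ℤ × ℤ) : comp k V pq →ₗ[k] ℕ → Vtot k V :=
  LinearMap.pi fun r =>
    DirectSum.lof k (ℤ × ℤ) (fun pq => V pq) (pq.1 + (r : ℤ), pq.2 - (r : ℤ)) ∘ₗ LinearMap.proj r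

/-- The power series `∑ v_{r+1} ħ^r` obtained from `∑ v_r ħ^r` by dropping the constant term and
dividing by `ħ`. -/
def tail (pq : ℤ × ℤ) (v : comp k V pq) : comp k V (pq.1 + 1, pq.2 - 1) := fun r =>
  castV k V (by simp only [Prod.mk.injEq]; constructor <;> (push_cast; ring)) (v (r + 1))

variable {pq pq' : ℤ × ℤ}

theorem coeff_apply (v : comp k V pq) (r : ℕ) :
    coeff k V pq v r = DirectSum.lof k (ℤ × ℤ) (fun pq => V pq) _ (v r) := rfl

theorem coeff_shiftLin_zero (v : comp k V pq) : coeff k V _ (shiftLin k V pq v) 0 = 0 := by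
  rw [coeff_apply, show shiftLin k V pq v 0 = 0 from rfl, map_zero]

theorem coeff_shiftLin_succ (v : comp k V pq) (r : ℕ) :
    coeff k V _ (shiftLin k V pq v) (r + 1) = coeff k V pq v r :=
  lof_castV k V _ _

theorem coeff_inclComp_zero (v : V pq) :
    coeff k V pq (inclComp k V pq v) 0 = DirectSum.lof k (ℤ × ℤ) (fun pq => V pq) pq v :=
  lof_castV k V _ _

theorem coeff_inclComp_succ (v : V pq) (r : ℕ) :
    coeff k V pq (inclComp k V pq v) (r + 1) = 0 := by
  rw [coeff_apply, show inclComp k V pq v (r + 1) = 0 from rfl, map_zero]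

theorem coeff_tail (v : comp k V pq) (r : ℕ) :
    coeff k V _ (tail k V pq v) r = coeff k V pq v (r + 1) :=
  lof_castV k V _ _

theorem hbar_lof (v : comp k V pq) :
    hbar k V (DirectSum.lof k (ℤ × ℤ) (fun pq => comp k V pq) pq v) =
      DirectSum.lof k (ℤ × ℤ) (fun pq => comp k V pq) _ (shiftLin k V pq v) :=
  DirectSum.toModule_lof ..

theorem incl_lof (v : V pq) :
    incl k V (DirectSum.lof k (ℤ × ℤ) (fun pq => V pq) pq v) =
      DirectSum.lof k (ℤ × ℤ) (fun pq => comp k V pq) pq (inclComp k V pq v) :=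
  DirectSum.toModule_lof ..

theorem lof_eq_lof_of_coeff_eq (hpq : pq = pq') {v : comp k V pq} {w : comp k V pq'}
    (hvw : ∀ r, coeff k V pq v r = coeff k V pq' w r) :
    DirectSum.lof k (ℤ × ℤ) (fun pq => comp k V pq) pq v =
      DirectSum.lof k (ℤ × ℤ) (fun pq => comp k V pq) pq' w := by
  subst hpq
  exact congrArg _ (funext fun r => DirectSum.of_injective (β := fun pq => V pq) _ (hvw r))

theorem lof_eq_incl_coeff_zero_add_hbar_tail (v : comp k V pq) :
    DirectSum.lof k (ℤ × ℤ) (fun pq => comp k V pq) pq v =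
      incl k V (coeff k V pq v 0) +
        hbar k V (DirectSum.lof k (ℤ × ℤ) (fun pq => comp k V pq) _ (tail k V pq v)) := by
  have hpq : (pq.1 + ((0 : ℕ) : ℤ), pq.2 - ((0 : ℕ) : ℤ)) = pq := by simp
  have constant_term : coeff k V pq v 0 =
      DirectSum.lof k (ℤ × ℤ) (fun pq => V pq) pq (castV k V hpq (v 0)) :=
    (lof_castV k V hpq (v 0)).symm
  rw [← sub_eq_iff_eq_add', constant_term, incl_lof, hbar_lof, ← map_sub]
  refine lof_eq_lof_of_coeff_eq k V (by simp) fun r => ?_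
  rw [map_sub, Pi.sub_apply]
  cases r with
  | zero => rw [coeff_inclComp_zero, coeff_shiftLin_zero, constant_term, sub_self]
  | succ r => rw [coeff_inclComp_succ, coeff_shiftLin_succ, coeff_tail, sub_zero]

theorem isAdicSum_lof (v : comp k V pq) :
    IsAdicSum (hbar k V) (fun r => incl k V (coeff k V pq v r))
      (DirectSum.lof k (ℤ × ℤ) (fun pq => comp k V pq) pq v) := by
  intro N
  induction N generalizing pq with
  | zero => simp
  | succ N ih =>
    rw [lof_eq_incl_coeff_zero_add_hbar_tail]
    refine add_apply_sub_sum_range_succ_mem_range_pow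
      (m := fun r => incl k V (coeff k V pq v r)) ?_
    simpa only [coeff_tail] using ih (tail k V pq v)

end PowerSeries

section Extension

variable {k : Type} [CommRing k] {V : ℤ × ℤ → ModuleCat.{0} k} {M : Type*} [AddCommGroup M]
  [Module k M] {h : M →ₗ[k] M}

theorem eq_of_comp_incl_eq (sep : (⨅ N : ℕ, LinearMap.range (h ^ N)) = ⊥)
    {f f' : Vh k V →ₗ[k] M} (hf : ∀ x, f (hbar k V x) = h (f x))
    (hf' : ∀ x, f' (hbar k V x) = h (f' x)) (hff' : f ∘ₗ incl k V = f' ∘ₗ incl k V) :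
    f = f' := by
  refine DirectSum.linearMap_ext _ fun pq => LinearMap.ext fun v => ?_
  have hv := (isAdicSum_lof k V v).map hf
  have hincl (x : Vtot k V) : f (incl k V x) = f' (incl k V x) := LinearMap.congr_fun hff' x
  simp only [hincl] at hv
  exact hv.unique sep ((isAdicSum_lof k V v).map hf')

theorem map_hbar_of_isAdicSum_lof (sep : (⨅ N : ℕ, LinearMap.range (h ^ N)) = ⊥)
    {g : Vtot k V →ₗ[k] M} {f : Vh k V →ₗ[k] M}
    (hf : ∀ pq v, IsAdicSum h (fun r => g (coeff k V pq v r))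
      (f (DirectSum.lof k (ℤ × ℤ) (fun pq => comp k V pq) pq v))) (x : Vh k V) :
    f (hbar k V x) = h (f x) := by
  suffices f ∘ₗ hbar k V = h ∘ₗ f from LinearMap.congr_fun this x
  refine DirectSum.linearMap_ext _ fun pq => LinearMap.ext fun v => ?_
  simp only [LinearMap.comp_apply, hbar_lof]
  refine (hf _ (shiftLin k V pq v)).unique sep ?_
  have shifted := IsAdicSum.of_succ
    (m := fun r => g (coeff k V _ (shiftLin k V pq v) r))
    (by simpa only [coeff_shiftLin_succ] using hf pq v)
  simpa only [coeff_shiftLin_zero, map_zero, zero_add] using shifted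

theorem comp_incl_of_isAdicSum_lof (sep : (⨅ N : ℕ, LinearMap.range (h ^ N)) = ⊥)
    {g : Vtot k V →ₗ[k] M} {f : Vh k V →ₗ[k] M}
    (hf : ∀ pq v, IsAdicSum h (fun r => g (coeff k V pq v r))
      (f (DirectSum.lof k (ℤ × ℤ) (fun pq => comp k V pq) pq v))) :
    f ∘ₗ incl k V = g := by
  refine DirectSum.linearMap_ext _ fun pq => LinearMap.ext fun v => ?_
  simp only [LinearMap.comp_apply, incl_lof]
  refine (hf pq (inclComp k V pq v)).unique sep ?_
  have constant := IsAdicSum.of_succ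
    (m := fun r => g (coeff k V pq (inclComp k V pq v) r))
    (by simpa only [coeff_inclComp_succ, map_zero] using isAdicSum_zero h)
  simpa only [coeff_inclComp_zero, map_zero, add_zero] using constant

theorem pow_apply_mem {GM : ℤ × ℤ → Submodule k M}
    (hhom : ∀ (pq : ℤ × ℤ) (x : M), x ∈ GM pq → h x ∈ GM (pq.1 - 1, pq.2 + 1))
    {pq : ℤ × ℤ} {x : M} (hx : x ∈ GM pq) (r : ℕ) :
    (h ^ r) x ∈ GM (pq.1 - (r : ℤ), pq.2 + (r : ℤ)) := by
  induction r with
  | zero => simpa using hx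
  | succ r ih =>
    simpa only [pow_succ', Module.End.mul_apply, Nat.cast_succ, sub_sub, add_assoc] using
      hhom _ _ ih

end Extension

theorem exists_isHomogMap_comp_incl_eq {k : Type} [CommRing k] {V : ℤ × ℤ → ModuleCat.{0} k}
    {M : Type} [AddCommGroup M] [Module k M] {GM : ℤ × ℤ → Submodule k M} {h : M →ₗ[k] M}
    (hhom : ∀ (pq : ℤ × ℤ) (x : M), x ∈ GM pq → h x ∈ GM (pq.1 - 1, pq.2 + 1))
    (sep : (⨅ N : ℕ, LinearMap.range (h ^ N)) = ⊥)
    (hcompl : ∀ (pq : ℤ × ℤ) (x : ℕ → M), (∀ N, x N ∈ GM pq) →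
      (∀ N, x (N + 1) - x N ∈ LinearMap.range (h ^ N)) →
      ∃ y ∈ GM pq, ∀ N, y - x N ∈ LinearMap.range (h ^ N))
    {c : ℤ × ℤ} {g : Vtot k V →ₗ[k] M} (hg : IsHomogMap k (VtotGr k V) GM c g) :
    ∃ f : Vh k V →ₗ[k] M, (∀ x, f (hbar k V x) = h (f x)) ∧
      IsHomogMap k (VhGr k V) GM c f ∧ f ∘ₗ incl k V = g := by
  have term_mem (pq : ℤ × ℤ) (v : comp k V pq) (r : ℕ) :
      (h ^ r) (g (coeff k V pq v r)) ∈ GM (pq + c) := by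
    convert pow_apply_mem hhom (hg _ (coeff k V pq v r) ⟨v r, rfl⟩) r using 2
    ext <;> simp only [Prod.fst_add, Prod.snd_add] <;> ring
  choose L hL using fun pq => exists_linearMap_isAdicSum sep
    (g.compLeft ℕ ∘ₗ coeff k V pq) fun v => exists_isAdicSum (hcompl (pq + c)) (term_mem pq v)
  have isAdicSum_toModule (pq : ℤ × ℤ) (v : comp k V pq) :
      IsAdicSum h (fun r => g (coeff k V pq v r)) (DirectSum.toModule k (ℤ × ℤ) M L
        (DirectSum.lof k (ℤ × ℤ) (fun pq => comp k V pq) pq v)) := by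
    rw [DirectSum.toModule_lof]
    exact (hL pq v).2
  refine ⟨DirectSum.toModule k (ℤ × ℤ) M L, map_hbar_of_isAdicSum_lof sep isAdicSum_toModule,
    ?_, comp_incl_of_isAdicSum_lof sep isAdicSum_toModule⟩
  rintro pq _ ⟨v, rfl⟩
  rw [DirectSum.toModule_lof]
  exact (hL pq v).1

theorem statement6_general (k : Type) [CommRing k] (V : ℤ × ℤ → ModuleCat.{0} k)
    {M : Type} [AddCommGroup M] [Module k M] (GM : ℤ × ℤ → Submodule k M) (h : M →ₗ[k] M)
    (hhom : ∀ (pq : ℤ × ℤ) (x : M), x ∈ GM pq → h x ∈ GM (pq.1 - 1, pq.2 + 1))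
    (sep : (⨅ N : ℕ, LinearMap.range (h ^ N)) = ⊥)
    (hcompl : ∀ (pq : ℤ × ℤ) (x : ℕ → M), (∀ N, x N ∈ GM pq) →
      (∀ N, x (N + 1) - x N ∈ LinearMap.range (h ^ N)) →
      ∃ y ∈ GM pq, ∀ N, y - x N ∈ LinearMap.range (h ^ N)) :
    ∀ g : Vtot k V →ₗ[k] M, IsInternalHom k (VtotGr k V) GM g →
      ∃! f : Vh k V →ₗ[k] M,
        (∀ x, f (hbar k V x) = h (f x)) ∧
        IsInternalHom k (VhGr k V) GM f ∧
        f.comp (incl k V) = g := by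
  rintro _ ⟨S, g, hg, rfl⟩
  choose f hfh hfc hfg using fun c => exists_isHomogMap_comp_incl_eq hhom sep hcompl (hg c)
  have sum_hbar (x : Vh k V) : (∑ c ∈ S, f c) (hbar k V x) = h ((∑ c ∈ S, f c) x) := by
    simp only [LinearMap.sum_apply, map_sum, hfh]
  have sum_comp_incl : (∑ c ∈ S, f c) ∘ₗ incl k V = ∑ c ∈ S, g c := by
    simp only [← hfg]
    exact map_sum (LinearMap.lcomp k M (incl k V)) f S
  refine ⟨∑ c ∈ S, f c, ⟨sum_hbar, ⟨S, f, hfc, rfl⟩, sum_comp_incl⟩, ?_⟩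
  rintro f' ⟨hf'h, -, hf'g⟩
  exact eq_of_comp_incl_eq sep hf'h sum_hbar (hf'g.trans sum_comp_incl.symm)

/-- If `M` is a bigraded complete `k[ħ]`-module (with `ħ` acting by
`h`, separated and componentwise complete) and `V` is a bigraded `k`-module, then the
restriction map `Hom_{k[ħ]}(V[[ħ]]^{bgr}, M) → Hom_k(V, M)` (precomposition with
`v ↦ v ⊗ 1`) is an isomorphism of the internal hom spaces of bigraded modules: every
internal-hom morphism `g : V → M` extends uniquely to an `ħ`-equivariant internal-hom
morphism `f : V[[ħ]]^{bgr} → M`. -/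
theorem statement6 (k : Type) [CommRing k] (V : ℤ × ℤ → ModuleCat.{0} k)
    {M : Type} [AddCommGroup M] [Module k M]
    (GM : ℤ × ℤ → Submodule k M) (hint : DirectSum.IsInternal GM)
    (h : M →ₗ[k] M)
    (hhom : ∀ (pq : ℤ × ℤ) (x : M), x ∈ GM pq → h x ∈ GM (pq.1 - 1, pq.2 + 1))
    (sep : (⨅ N : ℕ, LinearMap.range (h ^ N)) = ⊥)
    (hcompl : ∀ (pq : ℤ × ℤ) (x : ℕ → M), (∀ N, x N ∈ GM pq) →
      (∀ N, x (N+1) - x N ∈ LinearMap.range (h ^ N)) →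
      ∃ y ∈ GM pq, ∀ N, y - x N ∈ LinearMap.range (h ^ N)) :
    ∀ g : Vtot k V →ₗ[k] M, IsInternalHom k (VtotGr k V) GM g →
      ∃! f : Vh k V →ₗ[k] M,
        (∀ x, f (hbar k V x) = h (f x)) ∧
        IsInternalHom k (VhGr k V) GM f ∧
        f.comp (incl k V) = g :=
  statement6_general k V GM h hhom sep hcompl

end Paper
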